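/- arXiv:math/9902109 — 3 statements merged into one kernel-verified Lean document; each statement's English description precedes it below -/
import Mathlib

section
/- For all integers m and n, the following relations hold as ℚ-linear endomorphisms of Λ: S_m S_n + S_{n+1} S_{m−1} = 0; S*_m S*_n + S*_{n−1} S*_{m+1} = 0; and S_m S*_n − S_{m−1} S*_{n−1} = S*_n S_m − S*_{n+1} S_{m+1}. (These are the quadratic relations satisfied by the components of the vertex operator S(z) and the dual vertex operator S*(z).) -/
/-!
Both `S_n` and (up to the sign `(-1)^n` and `n ↦ -n`) `S*_n` have the shape
`∑_j (-1)^j a_{j-n} A_j`, where `a_k` acts by multiplication and the `A_j` are commuting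
constant-coefficient differential operators: `(a, A) = (h, e(∂))` for `S` and `(e, h(∂))` for `S*`.
A product of two such components is brought into normal order (all multiplications to the left of
all derivatives) by moving `A_i` past `b_k`. In generating functions the price of the exchange is
the scalar `exp (∑ c_n d_n (tz)^n/n)`, where `c` and `d` are the exponents `1` or `(-1)^(n-1)`
of the two families:

* it is `1 + tz` for `e(∂)` past `h` and for `h(∂)` past `e` (`phi_mul_plus`), so that
  `S_m S_n = N(m,n) - N(m-1,n+1)` with a symmetric normally ordered sum `N` (`vOp_plus`,
  `nOrd_symm`); the first two relations follow by cancellation;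
* it is `1/(1 - tz)` for `e(∂)` past `e` and for `h(∂)` past `h` (`phi_mul_minus`), so that each
  side of the third relation is the same normally ordered sum (`vOp_minus`).

The exchange rules rest on `n ∂/∂p_n` sending `h_k` to `h_{k-n}` and `e_k` to
`(-1)^(n-1) e_{k-n}` (`dOp_gZ`). All sums run over `ℤ`, with families extended by zero, as finite
sums `∑ᶠ`; this is legitimate because the operators of order `j` kill every polynomial of weighted
degree below `j` (`phi_eq_zero`), which also matches the truncated sums defining `Sop` and
`SstarOp`.
-/


open MvPolynomial

noncomputable section

/-- The ring of symmetric functions `Λ = ℚ[p₁,p₂,…]`, with the variable `X n`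
(for `n : ℕ+`) playing the role of the power sum `p_n`. -/
abbrev Lam : Type := MvPolynomial ℕ+ ℚ

/-- The power sum `p_n`. -/
def pp (n : ℕ+) : Lam := X n

/-- The family `g` with generating function `∑_k g_k t^k = exp (∑_{n≥1} c n · p_n tⁿ / n)`,
characterized by `g 0 = 1` together with the recursion obtained by differentiating the
generating function:  `(k+1) · g (k+1) = ∑_{i=0}^{k} c (i+1) · p_{i+1} · g (k-i)`. -/
def genFam (c : ℕ → ℚ) : ℕ → Lam
  | 0 => 1
  | (k+1) => (((k : ℚ) + 1)⁻¹) •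
      ∑ i ∈ Finset.range (k+1), c (i+1) • (pp ⟨i+1, Nat.succ_pos i⟩ * genFam c (k - i))
  decreasing_by exact Nat.lt_succ_of_le (Nat.sub_le k i)

/-- The complete homogeneous symmetric function `h_k`,
with generating function `exp (∑ p_n tⁿ/n)`. -/
def hh : ℕ → Lam := genFam fun _ => 1

/-- The elementary symmetric function `e_k`,
with generating function `exp (∑ (−1)^{n−1} p_n tⁿ/n)`. -/
def ee : ℕ → Lam := genFam fun n => (-1)^(n+1)

/-- `h` indexed by `ℤ` (zero for negative indices). -/
def hZ (n : ℤ) : Lam := if 0 ≤ n then hh n.toNat else 0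

/-- `e` indexed by `ℤ` (zero for negative indices). -/
def eZ (n : ℤ) : Lam := if 0 ≤ n then ee n.toNat else 0

/-- The differential operator `∏_i (i·∂/∂p_i)^(α i)` (the factors commute,
so the sorted product is the canonical one). -/
def monOp (α : ℕ+ →₀ ℕ) : Module.End ℚ Lam :=
  ((α.support.sort (· ≤ ·)).map fun (i : ℕ+) => (((i : ℕ) : ℚ) • (pderiv i).toLinearMap) ^ (α i)).prod

/-- `f(∂) P`: substitute `p_i ↦ i·∂/∂p_i` in `f` and apply the result to `P`. -/
def Dop (f : Lam) (P : Lam) : Lam := ∑ α ∈ f.support, f.coeff α • monOp α P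

/-- A bound for the weighted degree (`p_i` of weight `i`) of `P`;
`e_j(∂) P = 0 = h_j(∂) P` whenever `j > wbound P`. -/
def wbound (P : Lam) : ℕ := P.support.sup fun α => α.sum fun i k => (i : ℕ) * k

/-- The vertex operator component `S_n = ∑_{j ≥ max(0,n)} (−1)^j h_{j−n} · e_j(∂)`;
on a given polynomial only the (finitely many) terms with `j ≤ wbound P` act nontrivially. -/
def Sop (n : ℤ) (P : Lam) : Lam :=
  ∑ j ∈ Finset.range (wbound P + 1),
    if n ≤ (j : ℤ) then ((-1 : ℚ)) ^ j • (hZ ((j : ℤ) - n) * Dop (ee j) P) else 0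

/-- The dual vertex operator component `S*_n = ∑_{j ≥ max(0,−n)} (−1)^{j+n} e_{j+n} · h_j(∂)`. -/
def SstarOp (n : ℤ) (P : Lam) : Lam :=
  ∑ j ∈ Finset.range (wbound P + 1),
    if -n ≤ (j : ℤ) then ((-1 : ℚ)) ^ ((j : ℤ) + n) • (eZ ((j : ℤ) + n) * Dop (hh j) P) else 0

/-- The Schur function of an arbitrary integer tuple, via the Jacobi–Trudi determinant
`s_ρ = det (h_{ρ_i − i + j})`. -/
def schur {l : ℕ} (ρ : Fin l → ℤ) : Lam :=
  (Matrix.of fun i j : Fin l => hZ (ρ i - (i.1 : ℤ) + (j.1 : ℤ))).det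

/-- The dual Schur function of an integer tuple, `s_{ρ'} = det (e_{ρ_i − i + j})`. -/
def schurE {l : ℕ} (ρ : Fin l → ℤ) : Lam :=
  (Matrix.of fun i j : Fin l => eZ (ρ i - (i.1 : ℤ) + (j.1 : ℤ))).det


/-! ### Constant-coefficient differential operators -/

/-- The operator `n·∂/∂p_n`, that is, `b_n`. -/
def dOp (i : ℕ+) : Module.End ℚ Lam := ((i : ℕ) : ℚ) • (pderiv i).toLinearMap

lemma dOp_apply (i : ℕ+) (P : Lam) : dOp i P = ((i : ℕ) : ℚ) • pderiv i P := rfl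

lemma dOp_comm (i j : ℕ+) : dOp i * dOp j = dOp j * dOp i := by
  have h : ⁅(pderiv i : Derivation ℚ Lam Lam), (pderiv j : Derivation ℚ Lam Lam)⁆ = 0 := by
    refine MvPolynomial.derivation_ext fun k => ?_
    simp only [Derivation.commutator_apply, pderiv_X, Derivation.zero_apply, Pi.single_apply]
    split_ifs <;> simp
  refine LinearMap.ext fun P => ?_
  have hP : pderiv i (pderiv j P) = pderiv j (pderiv i P) := by
    have := congrArg (fun D : Derivation ℚ Lam Lam => D P) h
    simpa [Derivation.commutator_apply, sub_eq_zero] using this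
  simp only [Module.End.mul_apply, dOp_apply, map_smul, hP]
  rw [smul_comm]

lemma dOp_mul (i : ℕ+) (f g : Lam) : dOp i (f * g) = dOp i f * g + f * dOp i g := by
  simp only [dOp_apply, pderiv_mul, smul_add, smul_mul_assoc, mul_smul_comm]

lemma dOp_pp (i j : ℕ+) : dOp i (pp j) = if i = j then ((i : ℕ) : Lam) else 0 := by
  rw [dOp_apply, pp]
  split_ifs with h
  · subst h
    rw [pderiv_X_self, MvPolynomial.smul_eq_C_mul, mul_one, map_natCast]
  · rw [pderiv_X_of_ne (Ne.symm h), smul_zero]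

/-- The commutative algebra of constant-coefficient differential operators. -/
abbrev dAlg : Subalgebra ℚ (Module.End ℚ Lam) := Algebra.adjoin ℚ (Set.range dOp)

/-- `dAlg` is commutative because partial derivatives commute. -/
instance dAlgCommRing : CommRing dAlg :=
  { (inferInstance : Ring dAlg) with
    mul_comm := (Algebra.isMulCommutative_adjoin ℚ (by
      rintro _ ⟨i, rfl⟩ _ ⟨j, rfl⟩
      exact dOp_comm i j)).is_comm.comm }

/-- The substitution `f ↦ f(∂)`, `p_i ↦ i·∂/∂p_i`, as an algebra homomorphism. -/
def phi : Lam →ₐ[ℚ] Module.End ℚ Lam :=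
  dAlg.val.comp (aeval fun i => (⟨dOp i, Algebra.subset_adjoin ⟨i, rfl⟩⟩ : dAlg))

lemma phi_pp (i : ℕ+) : phi (pp i) = dOp i := by
  simp [phi, pp]

lemma phi_monomial (α : ℕ+ →₀ ℕ) (c : ℚ) : phi (monomial α c) = c • monOp α := by
  have hp : ∀ g : ℕ+ → dAlg, α.prod (fun i k => g i ^ k) =
      ((α.support.sort (· ≤ ·)).map fun i => g i ^ α i).prod := by
    intro g
    rw [Finsupp.prod, Finset.prod, ← Multiset.prod_coe, ← Multiset.map_coe, Finset.sort_eq]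
  rw [phi, AlgHom.comp_apply, aeval_monomial, hp, ← Algebra.smul_def, map_smul, map_list_prod,
    List.map_map]
  rfl

lemma Dop_eq (f P : Lam) : Dop f P = phi f P := by
  conv_rhs => rw [f.as_sum]
  simp only [Dop, map_sum, phi_monomial, LinearMap.sum_apply, LinearMap.smul_apply]

lemma phi_comm (f g P : Lam) : phi f (phi g P) = phi g (phi f P) := by
  rw [← Module.End.mul_apply, ← map_mul, mul_comm, map_mul, Module.End.mul_apply]

/-! ### The families `h` and `e` -/

/-- `genFam c` extended by zero to integer indices. -/
def gZ (c : ℕ → ℚ) (n : ℤ) : Lam := if 0 ≤ n then genFam c n.toNat else 0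

lemma gZ_neg (c : ℕ → ℚ) {n : ℤ} (h : n < 0) : gZ c n = 0 := by
  simp [gZ, not_le.mpr h]

lemma gZ_zero (c : ℕ → ℚ) : gZ c 0 = 1 := by simp [gZ, genFam]

/-- The recursion defining `genFam`, valid for every integer index; the upper limit `N` of the
sum is immaterial as soon as `j ≤ N`. -/
lemma gZ_rec (c : ℕ → ℚ) (j : ℤ) (N : ℕ) (h : j ≤ N) :
    (j : ℚ) • gZ c j =
      ∑ i ∈ Finset.range N, c (i + 1) • (pp i.succPNat * gZ c (j - 1 - i)) := by
  rcases lt_or_ge 0 j with hj | hj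
  · obtain ⟨k, rfl⟩ : ∃ k : ℕ, j = k + 1 := ⟨(j - 1).toNat, by omega⟩
    have hk : k + 1 ≤ N := by omega
    rw [← Finset.sum_subset (Finset.range_subset_range.mpr hk)]
    · have e1 : gZ c ((k : ℤ) + 1) = genFam c (k + 1) := by
        simp only [gZ]; rw [if_pos (by omega)]; rfl
      have : ((k : ℚ) + 1) ≠ 0 := by positivity
      rw [e1, genFam]
      push_cast
      rw [smul_inv_smul₀ this]
      refine Finset.sum_congr rfl fun i hi => ?_
      have hi' : i ≤ k := by simpa [Nat.lt_succ_iff] using hi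
      have : gZ c ((k : ℤ) + 1 - 1 - i) = genFam c (k - i) := by
        simp only [gZ]; rw [if_pos (by omega)]; congr 1; omega
      rw [this]; rfl
    · intro i _ hi
      rw [gZ_neg c (by simp at hi; omega)]; simp
  · have : (j : ℚ) • gZ c j = 0 := by
      rcases hj.lt_or_eq with h | rfl
      · rw [gZ_neg c h, smul_zero]
      · simp
    rw [this]
    refine (Finset.sum_eq_zero fun i _ => ?_).symm
    rw [gZ_neg c (by omega)]; simp

/-- Differentiating `exp (∑ c_n p_n tⁿ/n)`: the operator `(n+1)·∂/∂p_{n+1}` multiplies the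
generating function by `c_{n+1} t^{n+1}`. -/
lemma dOp_gZ (c : ℕ → ℚ) (n : ℕ) (k : ℤ) :
    dOp n.succPNat (gZ c k) = c (n + 1) • gZ c (k - 1 - n) := by
  suffices H : ∀ (K : ℕ) (k : ℤ), k ≤ K →
      dOp n.succPNat (gZ c k) = c (n + 1) • gZ c (k - 1 - n) from H k.toNat k (by omega)
  intro K
  induction K with
  | zero =>
    intro k hk
    rw [gZ_neg c (n := k - 1 - n) (by omega), smul_zero]
    rcases lt_or_eq_of_le hk with h | rfl
    · rw [gZ_neg c (by exact_mod_cast h), map_zero]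
    · simp [gZ_zero, dOp_apply]
  | succ K ih =>
    intro k hk
    rcases lt_or_ge (K : ℤ) k with h | h
    swap
    · exact ih k h
    obtain rfl : k = K + 1 := by push_cast at hk; omega
    have h0 : (((K : ℤ) + 1 : ℤ) : ℚ) ≠ 0 := by positivity
    apply smul_right_injective _ h0
    have r1 := gZ_rec c ((K : ℤ) + 1) (K + 1 + n) (by push_cast; omega)
    have r2 := gZ_rec c ((K : ℤ) + 1 - 1 - n) (K + 1 + n) (by push_cast; omega)
    simp only
    rw [← map_smul, r1, map_sum]
    have : ∀ i ∈ Finset.range (K + 1 + n),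
        dOp n.succPNat (c (i + 1) • (pp i.succPNat * gZ c ((K : ℤ) + 1 - 1 - i))) =
        (if n = i then ((n + 1 : ℚ) * c (n + 1)) • gZ c ((K : ℤ) + 1 - 1 - n) else 0) +
        c (n + 1) • (c (i + 1) • (pp i.succPNat * gZ c ((K : ℤ) + 1 - 1 - n - 1 - i))) := by
      intro i _
      rw [map_smul, dOp_mul, ih _ (by omega), dOp_pp]
      have e : (K : ℤ) + 1 - 1 - i - 1 - n = (K : ℤ) + 1 - 1 - n - 1 - i := by ring
      rw [e]
      by_cases hi : n = i
      · subst hi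
        simp [MvPolynomial.smul_eq_C_mul]
        ring
      · have : n.succPNat ≠ i.succPNat := fun h => hi (Nat.succPNat_injective h)
        simp only [if_neg hi, if_neg this, zero_mul, zero_add, mul_smul_comm]
        rw [smul_comm]
    rw [Finset.sum_congr rfl this, Finset.sum_add_distrib, ← Finset.smul_sum, ← r2,
      Finset.sum_ite_eq, if_pos (by simp), smul_smul, smul_smul, ← add_smul]
    congr 1
    push_cast; ring

/-! ### Commutation of `f(∂)` with multiplication operators -/

lemma phi_rec (c : ℕ → ℚ) (j : ℤ) (N : ℕ) (h : j ≤ N) (f : Lam) :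
    (j : ℚ) • phi (gZ c j) f =
      ∑ i ∈ Finset.range N, c (i + 1) • dOp i.succPNat (phi (gZ c (j - 1 - i)) f) := by
  have := congrArg (fun x => phi x f) (gZ_rec c j N h)
  simpa [phi_pp] using this

lemma phi_zero (c : ℕ → ℚ) (f : Lam) : phi (gZ c 0) f = f := by simp [gZ_zero]

lemma phi_neg (c : ℕ → ℚ) {n : ℤ} (h : n < 0) (f : Lam) : phi (gZ c n) f = 0 := by
  simp [gZ_neg c h]

/-- If `c_n d_n = (-1)^(n-1)`, the contraction factor of `c(∂; t)` with `d(z)` is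
`exp (∑ (-1)^(n-1) (tz)^n/n) = 1 + tz`. -/
lemma phi_mul_plus (c d : ℕ → ℚ) (hcd : ∀ i, c (i + 1) * d (i + 1) = (-1) ^ i)
    (j k : ℤ) (f : Lam) :
    phi (gZ c j) (gZ d k * f) =
      gZ d k * phi (gZ c j) f + gZ d (k - 1) * phi (gZ c (j - 1)) f := by
  suffices H : ∀ (K : ℕ) (j : ℤ), j ≤ K → ∀ k, phi (gZ c j) (gZ d k * f) =
      gZ d k * phi (gZ c j) f + gZ d (k - 1) * phi (gZ c (j - 1)) f from
    H j.toNat j (by omega) k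
  intro K
  induction K with
  | zero =>
    intro j hj k
    rw [phi_neg c (n := j - 1) (by omega)]
    rcases lt_or_eq_of_le hj with h | rfl
    · rw [phi_neg c (by exact_mod_cast h), phi_neg c (by exact_mod_cast h)]; simp
    · simp [phi_zero]
  | succ K ih =>
    intro j hj k
    rcases lt_or_ge (K : ℤ) j with h | h
    swap
    · exact ih j h k
    obtain rfl : j = K + 1 := by push_cast at hj; omega
    have h0 : (((K : ℤ) + 1 : ℤ) : ℚ) ≠ 0 := by positivity
    apply smul_right_injective _ h0
    simp only
    have r1 := phi_rec c ((K : ℤ) + 1) (K + 1) (by push_cast; omega) f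
    have r2 := phi_rec c ((K : ℤ) + 1 - 1) (K + 1) (by push_cast; omega) f
    rw [phi_rec c ((K : ℤ) + 1) (K + 1) (by push_cast; omega)]
    -- the contraction terms telescope
    set x : ℕ → Lam := fun i => gZ d (k - 1 - i) * phi (gZ c ((K : ℤ) + 1 - 1 - i)) f with hx
    have tel : ∀ N : ℕ, ∑ i ∈ Finset.range N, (-1 : ℚ) ^ i • (x i + x (i + 1)) =
        x 0 - (-1 : ℚ) ^ N • x N := by
      intro N
      induction N with
      | zero => simp
      | succ N ihN => rw [Finset.sum_range_succ, ihN, pow_succ]; module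
    have hxN : x (K + 1) = 0 := by
      simp only [hx]; rw [phi_neg c (by push_cast; omega), mul_zero]
    have : ∀ i ∈ Finset.range (K + 1),
        c (i + 1) • dOp i.succPNat (phi (gZ c ((K : ℤ) + 1 - 1 - i)) (gZ d k * f)) =
        gZ d k * (c (i + 1) • dOp i.succPNat (phi (gZ c ((K : ℤ) + 1 - 1 - i)) f)) +
        gZ d (k - 1) * (c (i + 1) • dOp i.succPNat (phi (gZ c ((K : ℤ) + 1 - 1 - 1 - i)) f)) +
        (-1 : ℚ) ^ i • (x i + x (i + 1)) := by
      intro i _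
      rw [ih _ (by omega), map_add, dOp_mul, dOp_mul, dOp_gZ, dOp_gZ, ← hcd i]
      have e1 : (K : ℤ) + 1 - 1 - i - 1 = (K : ℤ) + 1 - 1 - 1 - i := by ring
      have e2 : x (i + 1) = gZ d (k - 1 - 1 - i) * phi (gZ c ((K : ℤ) + 1 - 1 - 1 - i)) f := by
        simp only [hx]; push_cast
        rw [show k - 1 - ((i : ℤ) + 1) = k - 1 - 1 - i by ring,
          show (K : ℤ) + 1 - 1 - (i + 1) = (K : ℤ) + 1 - 1 - 1 - i by ring]
      rw [e1, e2]
      simp only [hx, MvPolynomial.smul_eq_C_mul, C_mul]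
      ring
    rw [Finset.sum_congr rfl this, Finset.sum_add_distrib, Finset.sum_add_distrib,
      ← Finset.mul_sum, ← Finset.mul_sum, ← r1, ← r2, tel, hxN]
    simp only [hx, MvPolynomial.smul_eq_C_mul]
    push_cast
    simp
    ring

/-- If `c_n d_n = 1`, the contraction factor of `c(∂; t)` with `d(z)` is
`exp (∑ (tz)^n/n) = 1/(1 - tz)`. -/
lemma phi_mul_minus (c d : ℕ → ℚ) (hcd : ∀ i, c (i + 1) * d (i + 1) = 1)
    (j k : ℤ) (f : Lam) :
    phi (gZ c j) (gZ d k * f) =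
      gZ d k * phi (gZ c j) f + phi (gZ c (j - 1)) (gZ d (k - 1) * f) := by
  suffices H : ∀ (K : ℕ) (j : ℤ), j ≤ K → ∀ k, phi (gZ c j) (gZ d k * f) =
      gZ d k * phi (gZ c j) f + phi (gZ c (j - 1)) (gZ d (k - 1) * f) from
    H j.toNat j (by omega) k
  intro K
  induction K with
  | zero =>
    intro j hj k
    rw [phi_neg c (n := j - 1) (by omega)]
    rcases lt_or_eq_of_le hj with h | rfl
    · rw [phi_neg c (by exact_mod_cast h), phi_neg c (by exact_mod_cast h)]; simp
    · simp [phi_zero]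
  | succ K ih =>
    intro j hj k
    rcases lt_or_ge (K : ℤ) j with h | h
    swap
    · exact ih j h k
    obtain rfl : j = K + 1 := by push_cast at hj; omega
    have h0 : (((K : ℤ) + 1 : ℤ) : ℚ) ≠ 0 := by positivity
    apply smul_right_injective _ h0
    simp only
    have r1 := phi_rec c ((K : ℤ) + 1) (K + 1) (by push_cast; omega) f
    have r2 := phi_rec c ((K : ℤ) + 1 - 1) (K + 1) (by push_cast; omega) (gZ d (k - 1) * f)
    rw [phi_rec c ((K : ℤ) + 1) (K + 1) (by push_cast; omega)]
    -- the closed form of the relation one degree lower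
    have tel : ∀ N : ℕ, phi (gZ c ((K : ℤ) + 1 - 1)) (gZ d (k - 1) * f) =
        ∑ i ∈ Finset.range N, gZ d (k - 1 - i) * phi (gZ c ((K : ℤ) + 1 - 1 - i)) f +
        phi (gZ c ((K : ℤ) + 1 - 1 - N)) (gZ d (k - 1 - N) * f) := by
      intro N
      induction N with
      | zero => simp
      | succ N ihN =>
        rw [Finset.sum_range_succ, ihN, ih _ (by omega) (k - 1 - N)]
        push_cast
        simp only [sub_sub, add_assoc]
    have t := tel (K + 1)
    rw [phi_neg c (n := (K : ℤ) + 1 - 1 - (K + 1 : ℕ)) (by push_cast; omega), add_zero] at t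
    have : ∀ i ∈ Finset.range (K + 1),
        c (i + 1) • dOp i.succPNat (phi (gZ c ((K : ℤ) + 1 - 1 - i)) (gZ d k * f)) =
        gZ d k * (c (i + 1) • dOp i.succPNat (phi (gZ c ((K : ℤ) + 1 - 1 - i)) f)) +
        c (i + 1) • dOp i.succPNat (phi (gZ c ((K : ℤ) + 1 - 1 - 1 - i)) (gZ d (k - 1) * f)) +
        gZ d (k - 1 - i) * phi (gZ c ((K : ℤ) + 1 - 1 - i)) f := by
      intro i _
      have e1 : (K : ℤ) + 1 - 1 - i - 1 = (K : ℤ) + 1 - 1 - 1 - i := by ring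
      have e3 : (C (c (i + 1)) * C (d (i + 1)) : Lam) = 1 := by rw [← C_mul, hcd, C_1]
      rw [ih _ (by omega), map_add, dOp_mul, dOp_gZ, e1]
      simp only [MvPolynomial.smul_eq_C_mul]
      linear_combination gZ d (k - 1 - i) * phi (gZ c ((K : ℤ) + 1 - 1 - i)) f * e3
    rw [Finset.sum_congr rfl this, Finset.sum_add_distrib, Finset.sum_add_distrib,
      ← Finset.mul_sum, ← r1, ← r2, ← t]
    simp only [MvPolynomial.smul_eq_C_mul]
    push_cast
    simp
    ring

/-! ### Local nilpotency -/

/-- The weighted degree of a monomial, `p_i` having weight `i`. -/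
def wt (α : ℕ+ →₀ ℕ) : ℕ := α.sum fun i k => (i : ℕ) * k

/-- The operator lowers the weight by `j`: by the recursion it is a combination of
`phi (gZ c (j - i)) ∘ dOp i`, and `dOp i` lowers the weight by `i`. -/
lemma phi_monomial_eq_zero (c : ℕ → ℚ) (j : ℕ) (α : ℕ+ →₀ ℕ) (h : wt α < j) :
    phi (gZ c j) (monomial α 1) = 0 := by
  induction j using Nat.strong_induction_on generalizing α with
  | _ j ih =>
    have h0 : ((j : ℤ) : ℚ) ≠ 0 := by
      have : j ≠ 0 := by omega
      exact_mod_cast this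
    apply smul_right_injective _ h0
    simp only [smul_zero]
    rw [phi_rec c j j le_rfl]
    refine Finset.sum_eq_zero fun i hi => ?_
    have hi' : i < j := by simpa using hi
    rw [← phi_pp, phi_comm, phi_pp, dOp_apply, pderiv_monomial]
    by_cases hα : α i.succPNat = 0
    · simp [hα]
    · obtain ⟨β, rfl⟩ : ∃ β, α = β + Finsupp.single i.succPNat 1 :=
        ⟨α - Finsupp.single i.succPNat 1, (tsub_add_cancel_of_le (by
          rw [Finsupp.single_le_iff]; omega)).symm⟩
      have hw : wt (β + Finsupp.single i.succPNat 1) = wt β + (i + 1) := by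
        unfold wt
        rw [Finsupp.sum_add_index' (by simp) (by intros; ring)]
        simp
      rw [add_tsub_cancel_right]
      have e : (j : ℤ) - 1 - i = ((j - 1 - i : ℕ) : ℤ) := by omega
      have := ih (j - 1 - i) (by omega) β (by omega)
      rw [e, ← mul_one (1 * _ : ℚ), ← smul_eq_mul (1 * _ : ℚ) 1, ← smul_monomial, map_smul,
        map_smul, this]
      simp

lemma phi_eq_zero (c : ℕ → ℚ) (j : ℤ) (P : Lam) (h : (wbound P : ℤ) < j) :
    phi (gZ c j) P = 0 := by
  obtain ⟨j, rfl⟩ : ∃ k : ℕ, j = k := ⟨j.toNat, by omega⟩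
  rw [P.as_sum, map_sum]
  refine Finset.sum_eq_zero fun α hα => ?_
  have : wt α ≤ wbound P :=
    Finset.le_sup (f := fun α : ℕ+ →₀ ℕ => α.sum fun i k => (i : ℕ) * k) hα
  rw [← mul_one (coeff α P), ← smul_eq_mul, ← smul_monomial, map_smul,
    phi_monomial_eq_zero c j α (by omega), smul_zero]

/-- `A j f` is nonzero for only finitely many `j`, for each `f`. -/
def LocFin (A : ℤ → Module.End ℚ Lam) : Prop :=
  ∀ f, (Function.support fun j => A j f).Finite

lemma locFin_phi (c : ℕ → ℚ) : LocFin fun j => phi (gZ c j) := by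
  intro f
  refine (Set.finite_Icc (0 : ℤ) (wbound f)).subset fun j hj => ?_
  rw [Function.mem_support] at hj
  constructor
  · by_contra h
    exact hj (phi_neg c (by omega) f)
  · by_contra h
    exact hj (phi_eq_zero c j f (by omega))

/-! ### Quadratic relations for abstract vertex operators -/

/-- The component `∑_j (-1)^j a_{j-n} A_j` of an abstract vertex operator. -/
def vOp (a : ℤ → Lam) (A : ℤ → Module.End ℚ Lam) (n : ℤ) (f : Lam) : Lam :=
  ∑ᶠ j : ℤ, (-1 : ℚ) ^ j • (a (j - n) * A j f)

/-- The double sum `∑_{i,j} (-1)^{i+j} a_{i-m} F_{i,j}`. -/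
def dbl (a : ℤ → Lam) (m : ℤ) (F : ℤ → ℤ → Lam) : Lam :=
  ∑ᶠ p : ℤ × ℤ, (-1 : ℚ) ^ (p.1 + p.2) • (a (p.1 - m) * F p.1 p.2)

/-- The family `F` has finite support. -/
def FinSupp₂ (F : ℤ → ℤ → Lam) : Prop := (Function.support fun p : ℤ × ℤ => F p.1 p.2).Finite

lemma finSupp₂_comp {A : ℤ → Module.End ℚ Lam} (hA : LocFin A) {Q : ℤ → Lam}
    (hQ : (Function.support Q).Finite) : FinSupp₂ fun i j => A i (Q j) := by
  refine (hQ.biUnion fun j _ => (hA (Q j)).image fun i => (i, j)).subset ?_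
  rintro ⟨i, j⟩ h
  simp only [Function.mem_support] at h
  simp only [Set.mem_iUnion, Set.mem_image, Function.mem_support, Prod.mk.injEq]
  refine ⟨j, fun h' => h (by rw [h', map_zero]), i, h, rfl, rfl⟩

lemma finSupp₂_mul {F : ℤ → ℤ → Lam} (hF : FinSupp₂ F) (G : ℤ → ℤ → Lam) :
    FinSupp₂ fun i j => G i j * F i j :=
  hF.subset fun p hp => by
    simp only [Function.mem_support] at hp ⊢
    exact right_ne_zero_of_mul hp

lemma finSupp₂_shift {F : ℤ → ℤ → Lam} (hF : FinSupp₂ F) : FinSupp₂ fun i j => F (i - 1) j := by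
  have := hF.preimage (f := fun p : ℤ × ℤ => (p.1 - 1, p.2))
    (by rintro ⟨a, b⟩ _ ⟨c, d⟩ _ h; simpa using h)
  exact this

lemma dbl_add (a : ℤ → Lam) (m : ℤ) {F G : ℤ → ℤ → Lam} (hF : FinSupp₂ F) (hG : FinSupp₂ G) :
    dbl a m (fun i j => F i j + G i j) = dbl a m F + dbl a m G := by
  unfold dbl
  rw [← finsum_add_distrib]
  · simp only [mul_add, smul_add]
  · refine Set.Finite.subset hF fun p hp h => hp ?_
    simp only at h ⊢
    rw [h]; simp
  · refine Set.Finite.subset hG fun p hp h => hp ?_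
    simp only at h ⊢
    rw [h]; simp

/-- Shifting `i` by one costs the sign `-1` and moves the index of `a`. -/
lemma dbl_shift (a : ℤ → Lam) (m : ℤ) (F : ℤ → ℤ → Lam) :
    dbl a m (fun i j => F (i - 1) j) = - dbl a (m - 1) F := by
  unfold dbl
  rw [← finsum_neg_distrib,
    ← finsum_comp_equiv ((Equiv.addRight (1 : ℤ)).prodCongr (Equiv.refl ℤ))]
  refine finsum_congr fun p => ?_
  have e1 : p.1 + 1 + p.2 = p.1 + p.2 + 1 := by ring
  have e2 : p.1 + 1 - m = p.1 - (m - 1) := by ring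
  simp [e1, e2, zpow_add_one₀]

lemma vOp_vOp (a b : ℤ → Lam) {A B : ℤ → Module.End ℚ Lam} (hA : LocFin A) (hB : LocFin B)
    (m n : ℤ) (f : Lam) :
    vOp a A m (vOp b B n f) = dbl a m fun i j => A i (b (j - n) * B j f) := by
  have hQ : (Function.support fun j => b (j - n) * B j f).Finite :=
    (hB f).subset fun j hj => right_ne_zero_of_mul hj
  have hQ' : (Function.support fun j : ℤ => (-1 : ℚ) ^ j • (b (j - n) * B j f)).Finite :=
    hQ.subset fun j hj h => hj (by simp only at h ⊢; rw [h, smul_zero])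
  have h2 := finSupp₂_comp hA hQ
  unfold dbl
  rw [finsum_curry]
  · refine finsum_congr fun i => ?_
    rw [vOp, map_finsum (A i) hQ']
    have h3 : (Function.support fun j : ℤ => A i ((-1 : ℚ) ^ j • (b (j - n) * B j f))).Finite :=
      hQ'.subset fun j hj h => hj (by simp only at h ⊢; rw [h, map_zero])
    have h4 := (AddMonoidHom.mulLeft (a (i - m))).map_finsum h3
    simp only [AddMonoidHom.coe_mulLeft] at h4
    rw [h4, smul_finsum]
    refine finsum_congr fun j => ?_
    rw [map_smul, mul_smul_comm, smul_smul, zpow_add₀ (by norm_num)]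
  · refine Set.Finite.subset h2 fun p hp h => hp ?_
    simp only at h ⊢
    rw [h]; simp

/-- The normally ordered double sum `∑_{i,j} (-1)^{i+j} a_{i-m} b_{j-n} A_i B_j`. -/
def nOrd (a b : ℤ → Lam) (A B : ℤ → Module.End ℚ Lam) (m n : ℤ) (f : Lam) : Lam :=
  dbl a m fun i j => b (j - n) * A i (B j f)

lemma nOrd_symm (a b : ℤ → Lam) (A B : ℤ → Module.End ℚ Lam)
    (hc : ∀ i j f, A i (B j f) = B j (A i f)) (m n : ℤ) (f : Lam) :
    nOrd a b A B m n f = nOrd b a B A n m f := by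
  unfold nOrd dbl
  rw [← finsum_comp_equiv (Equiv.prodComm ℤ ℤ)]
  refine finsum_congr fun p => ?_
  simp only [Equiv.prodComm_apply, Prod.fst_swap, Prod.snd_swap, hc]
  rw [add_comm, mul_left_comm]

/-- Contraction factor `1 + tz`: the product of two components is a difference of two normally
ordered sums. -/
lemma vOp_plus (a b : ℤ → Lam) {A B : ℤ → Module.End ℚ Lam} (hA : LocFin A) (hB : LocFin B)
    (hab : ∀ i k f, A i (b k * f) = b k * A i f + b (k - 1) * A (i - 1) f) (m n : ℤ) (f : Lam) :
    vOp a A m (vOp b B n f) = nOrd a b A B m n f - nOrd a b A B (m - 1) (n + 1) f := by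
  have h2 : FinSupp₂ fun i j => A i (B j f) := finSupp₂_comp hA (hB f)
  rw [vOp_vOp a b hA hB]
  simp only [hab]
  rw [dbl_add a m (finSupp₂_mul h2 _) (finSupp₂_mul (finSupp₂_shift h2) fun _ j => b (j - n - 1))]
  rw [dbl_shift a m fun i j => b (j - n - 1) * A i (B j f)]
  simp only [nOrd, sub_sub]
  rw [← sub_eq_add_neg]

/-- Contraction factor `1/(1 - tz)`: a sum of two products of components is normally ordered. -/
lemma vOp_minus (a b : ℤ → Lam) {A B : ℤ → Module.End ℚ Lam} (hA : LocFin A) (hB : LocFin B)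
    (hab : ∀ i k f, A i (b k * f) = b k * A i f + A (i - 1) (b (k - 1) * f))
    (m n : ℤ) (f : Lam) :
    vOp a A m (vOp b B n f) + vOp a A (m - 1) (vOp b B (n + 1) f) = nOrd a b A B m n f := by
  have h2 : FinSupp₂ fun i j => A i (B j f) := finSupp₂_comp hA (hB f)
  have h3 : FinSupp₂ fun i j => A i (b (j - n - 1) * B j f) :=
    finSupp₂_comp hA ((hB f).subset fun j hj => right_ne_zero_of_mul hj)
  rw [vOp_vOp a b hA hB, vOp_vOp a b hA hB]
  have e : (dbl a m fun i j => A i (b (j - n) * B j f)) = dbl a m fun i j =>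
      b (j - n) * A i (B j f) + A (i - 1) (b (j - n - 1) * B j f) :=
    congrArg (dbl a m) (funext₂ fun i j => hab i (j - n) (B j f))
  rw [e, dbl_add a m (finSupp₂_mul h2 _) (finSupp₂_shift h3)]
  rw [dbl_shift a m fun i j => A i (b (j - n - 1) * B j f)]
  simp only [nOrd, ← sub_sub]
  abel

/-! ### The operators `S_n` and `S*_n` -/

/-- The coefficients `1` in the exponent of the generating function of `h`. -/
abbrev cH : ℕ → ℚ := fun _ => 1

/-- The coefficients `(-1)^(n-1)` in the exponent of the generating function of `e`. -/
abbrev cE : ℕ → ℚ := fun n => (-1) ^ (n + 1)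

lemma vOp_phi (a : ℤ → Lam) (c : ℕ → ℚ) (n : ℤ) (P : Lam) :
    vOp a (fun j => phi (gZ c j)) n P = ∑ j ∈ Finset.range (wbound P + 1),
      (-1 : ℚ) ^ j • (a (j - n) * phi (genFam c j) P) := by
  unfold vOp
  rw [finsum_eq_sum_of_support_subset (s := (Finset.range (wbound P + 1)).map Nat.castEmbedding)]
  · simp [gZ]
  · intro j hj
    have h1 : 0 ≤ j := by
      by_contra h
      exact hj (by simp only; rw [phi_neg c (by omega)]; simp)
    have h2 : j ≤ wbound P := by
      by_contra h
      exact hj (by simp only; rw [phi_eq_zero c j P (by omega)]; simp)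
    simp only [Finset.coe_map, Set.mem_image, Finset.mem_coe, Finset.mem_range]
    exact ⟨j.toNat, by omega, by simp [h1]⟩

lemma Sop_eq (n : ℤ) (P : Lam) :
    Sop n P = vOp (gZ cH) (fun j => phi (gZ cE j)) n P := by
  rw [vOp_phi, Sop]
  refine Finset.sum_congr rfl fun j _ => ?_
  split_ifs with h
  · rw [Dop_eq]; rfl
  · rw [gZ_neg cH (by omega)]; simp

lemma SstarOp_eq (n : ℤ) (P : Lam) :
    SstarOp n P = (-1 : ℚ) ^ n • vOp (gZ cE) (fun j => phi (gZ cH j)) (-n) P := by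
  rw [vOp_phi, SstarOp, Finset.smul_sum]
  refine Finset.sum_congr rfl fun j _ => ?_
  rw [sub_neg_eq_add]
  split_ifs with h
  · rw [Dop_eq, zpow_add₀ (by norm_num), mul_comm, mul_smul, zpow_natCast]; rfl
  · rw [gZ_neg cE (by omega)]; simp

lemma vOp_smul (a : ℤ → Lam) (A : ℤ → Module.End ℚ Lam) (n : ℤ) (r : ℚ) (f : Lam) :
    vOp a A n (r • f) = r • vOp a A n f := by
  unfold vOp
  rw [smul_finsum]
  refine finsum_congr fun j => ?_
  rw [map_smul, mul_smul_comm, smul_comm]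

/-- the quadratic relations satisfied by the components of the vertex
operator `S(z)` and the dual vertex operator `S*(z)`, as ℚ-linear endomorphisms of `Λ`
(stated pointwise):
`S_m S_n + S_{n+1} S_{m−1} = 0`, `S*_m S*_n + S*_{n−1} S*_{m+1} = 0`, and
`S_m S*_n − S_{m−1} S*_{n−1} = S*_n S_m − S*_{n+1} S_{m+1}`. -/
theorem vertex_operator_relations (m n : ℤ) (P : Lam) :
    Sop m (Sop n P) + Sop (n+1) (Sop (m-1) P) = 0 ∧
    SstarOp m (SstarOp n P) + SstarOp (n-1) (SstarOp (m+1) P) = 0 ∧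
    Sop m (SstarOp n P) - Sop (m-1) (SstarOp (n-1) P)
      = SstarOp n (Sop m P) - SstarOp (n+1) (Sop (m+1) P) := by
  have hE := locFin_phi cE
  have hH := locFin_phi cH
  have sq : ∀ i : ℕ, ((-1 : ℚ) ^ (i + 1 + 1)) * (-1) ^ (i + 1 + 1) = 1 := fun i => by
    rw [← mul_pow]; norm_num
  have cEh := phi_mul_plus cE cH fun i => by simp [cE, cH, pow_succ]
  have cHe := phi_mul_plus cH cE fun i => by simp [cE, cH, pow_succ]
  have cHh := phi_mul_minus cH cH fun i => by simp [cH]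
  have cEe := phi_mul_minus cE cE sq
  refine ⟨?_, ?_, ?_⟩
  · simp only [Sop_eq]
    rw [vOp_plus _ _ hE hE cEh, vOp_plus _ _ hE hE cEh,
      nOrd_symm _ _ _ _ (fun _ _ _ => phi_comm _ _ _) (n + 1),
      nOrd_symm _ _ _ _ (fun _ _ _ => phi_comm _ _ _) (n + 1 - 1)]
    simp
  · simp only [SstarOp_eq, vOp_smul, smul_smul, ← zpow_add₀ (show (-1 : ℚ) ≠ 0 by norm_num)]
    rw [vOp_plus _ _ hH hH cHe, vOp_plus _ _ hH hH cHe,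
      nOrd_symm _ _ _ _ (fun _ _ _ => phi_comm _ _ _) (-(n - 1)),
      nOrd_symm _ _ _ _ (fun _ _ _ => phi_comm _ _ _) (-(n - 1) - 1),
      show n - 1 + (m + 1) = m + n by ring, show -(m + 1) + 1 = -m by ring,
      show -(n - 1) - 1 = -n by ring, show -(m + 1) = -m - 1 by ring,
      show -(n - 1) = -n + 1 by ring, ← smul_add]
    simp
  · have e1 : (-1 : ℚ) ^ (n - 1) = - (-1) ^ n := by
      rw [zpow_sub_one₀ (by norm_num)]; norm_num
    have e2 : (-1 : ℚ) ^ (n + 1) = - (-1) ^ n := by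
      rw [zpow_add_one₀ (by norm_num)]; norm_num
    simp only [Sop_eq, SstarOp_eq, vOp_smul, e1, e2]
    simp only [neg_smul, sub_neg_eq_add, ← smul_add]
    have l := vOp_minus (gZ cH) (gZ cE) hE hH cEe m (-n) P
    have r := vOp_minus (gZ cE) (gZ cH) hH hE cHh (-n) m P
    rw [show -(n - 1) = -n + 1 by ring, show -(n + 1) = -n - 1 by ring, l, r,
      nOrd_symm _ _ _ _ fun _ _ _ => phi_comm _ _ _]
end
end

section
/- The Schur functions form an orthonormal family for the Hall inner product: for all partitions λ and μ, ⟨s_λ, s_μ⟩ = δ_{λ,μ}, where s_λ = det(h_{λ_i−i+j})_{1≤i,j≤l(λ)}. -/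
/-!
The proof pairs the Jacobi–Trudi determinant of `λ` with the bialternant form of `s_μ`.

Multiplication by `p_n` has adjoint `n·∂/∂p_n` for the Hall form (`hall_mul_X`), and this
derivation sends `h_m` to `h_{m-n}` (`skewP_hZ`). By induction on `f`, pairing `f` with
`h_{b_1} ⋯ h_{b_N}` extracts the coefficient of `x^b` in the specialization `f(x_1, …, x_N)`
(`hall_prod_hZ`). Expanding the determinant `s_λ` therefore gives, with `δ = (N-1, …, 1, 0)`,
`⟨s_λ, f⟩ = [x^{λ+δ}] (a_δ · f(x))` (`hall_schur`), where `a_{μ+δ} = det (x_k^{μ_i+N-i})`.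

The bialternant formula `a_δ · s_μ(x) = a_{μ+δ}` (`ev_schur_mul_alternant`) follows by multiplying
the matrix `(h_{μ_i-i+j}(x))` by the matrix of coefficients of the polynomials
`∏_{i ≠ k} (1 - x_i t)`, since `∏_i 1/(1 - x_i t) = ∑ h_m(x) t^m`; the case `μ = 0` identifies the
determinant of the second matrix as `a_δ`. Finally `[x^{λ+δ}] a_{μ+δ} = δ_{λμ}`, because `λ+δ` and
`μ+δ` are strictly decreasing. Partitions of different lengths are brought to a common `N` by
padding with zeros, which does not change the determinant (`schur_padZero`).
-/

open MvPolynomial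

noncomputable section

/-- `z_λ = ∏_i i^{m_i}·m_i!` for the monomial `p^α`, i.e. for `λ = (1^{α 1} 2^{α 2} ⋯)`. -/
def zee (α : ℕ+ →₀ ℕ) : ℚ := α.prod fun i k => ((i : ℕ) : ℚ) ^ k * (Nat.factorial k : ℚ)

/-- The Hall inner product on `Λ`: the symmetric ℚ-bilinear form determined on the
power-sum basis `{p_λ}` (i.e. the monomials in the `p_i`) by `⟨p_λ, p_μ⟩ = δ_{λμ} z_λ`. -/
def hall (P Q : Lam) : ℚ := ∑ α ∈ P.support, P.coeff α * Q.coeff α * zee α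

/-! ### The product rule over a finset -/

lemma derivation_prod {R A ι : Type*} [CommSemiring R] [CommSemiring A] [Algebra R A]
    [DecidableEq ι] (D : Derivation R A A) (s : Finset ι) (f : ι → A) :
    D (∏ i ∈ s, f i) = ∑ i ∈ s, D (f i) * ∏ j ∈ s.erase i, f j := by
  induction s using Finset.induction_on with
  | empty => simp
  | insert a s ha ih =>
    rw [Finset.prod_insert ha, Derivation.leibniz, ih, Finset.sum_insert ha,
      Finset.erase_insert ha, smul_eq_mul, smul_eq_mul, Finset.mul_sum, add_comm,
      mul_comm (∏ i ∈ s, f i)]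
    congr 1
    refine Finset.sum_congr rfl fun i hi => ?_
    have hia : a ≠ i := fun h => ha (h ▸ hi)
    rw [Finset.erase_insert_of_ne hia, Finset.prod_insert (by simp [ha])]
    ring

/-! ### Bilinearity of the Hall form, and the adjoint of multiplication by a power sum -/

lemma hall_eq_sum {P : Lam} {s : Finset (ℕ+ →₀ ℕ)} (h : P.support ⊆ s) (Q : Lam) :
    hall P Q = ∑ α ∈ s, P.coeff α * Q.coeff α * zee α := by
  refine Finset.sum_subset h fun α _ hα => ?_
  rw [notMem_support_iff.1 hα]; simp

lemma hall_comm (P Q : Lam) : hall P Q = hall Q P := by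
  classical
  rw [hall_eq_sum (Finset.subset_union_left (s₂ := Q.support)),
    hall_eq_sum (Finset.subset_union_right (s₁ := P.support))]
  exact Finset.sum_congr rfl fun α _ => by ring

/-- The Hall form with its second argument fixed, as a linear functional of the first. -/
def hallL (Q : Lam) : Lam →ₗ[ℚ] ℚ where
  toFun P := hall P Q
  map_add' P P' := by
    classical
    rw [hall_eq_sum (s := P.support ∪ P'.support) support_add,
      hall_eq_sum (Finset.subset_union_left (s₂ := P'.support)),
      hall_eq_sum (Finset.subset_union_right (s₁ := P.support)), ← Finset.sum_add_distrib]
    exact Finset.sum_congr rfl fun α _ => by rw [coeff_add]; ring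
  map_smul' c P := by
    rw [hall_eq_sum (s := P.support) support_smul, hall, RingHom.id_apply, smul_eq_mul,
      Finset.mul_sum]
    exact Finset.sum_congr rfl fun α _ => by rw [coeff_smul, smul_eq_mul]; ring

lemma hallL_apply (P Q : Lam) : hallL Q P = hall P Q := rfl

lemma hall_add_right (P Q Q' : Lam) : hall P (Q + Q') = hall P Q + hall P Q' := by
  simp only [hall_comm P, ← hallL_apply, map_add]

lemma hall_monomial (α : ℕ+ →₀ ℕ) (c : ℚ) (Q : Lam) :
    hall (monomial α c) Q = c * Q.coeff α * zee α := by
  classical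
  rw [hall_eq_sum support_monomial_subset]; simp

lemma zee_add_single (α : ℕ+ →₀ ℕ) (n : ℕ+) :
    zee (α + Finsupp.single n 1) = zee α * ((n : ℕ) * (α n + 1)) := by
  classical
  have key : ∀ β : ℕ+ →₀ ℕ, β.support ⊆ insert n α.support →
      zee β = (((n : ℕ) : ℚ) ^ β n * (Nat.factorial (β n) : ℚ)) *
        ∏ i ∈ α.support.erase n, (((i : ℕ) : ℚ) ^ β i * (Nat.factorial (β i) : ℚ)) := by
    intro β hβ
    rw [zee, Finsupp.prod_of_support_subset _ hβ _ (by simp), ← Finset.insert_erase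
      (Finset.mem_insert_self n α.support), Finset.prod_insert (by simp)]
    congr 2
    ext i; simp only [Finset.mem_erase, Finset.mem_insert]; tauto
  rw [key _ (by
    intro i hi
    by_cases h : i = n
    · simp [h]
    · simpa [h, Finsupp.single_apply, Ne.symm h] using hi),
    key α (Finset.subset_insert _ _)]
  have : ∏ i ∈ α.support.erase n, ((((i : ℕ) : ℚ) ^ (α + Finsupp.single n 1 : ℕ+ →₀ ℕ) i *
      (Nat.factorial ((α + Finsupp.single n 1 : ℕ+ →₀ ℕ) i) : ℚ))) =
      ∏ i ∈ α.support.erase n, (((i : ℕ) : ℚ) ^ α i * (Nat.factorial (α i) : ℚ)) := by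
    refine Finset.prod_congr rfl fun i hi => ?_
    have : n ≠ i := (Finset.ne_of_mem_erase hi).symm
    simp [this]
  rw [this]
  simp only [Finsupp.add_apply, Finsupp.single_eq_same, Nat.factorial_succ]
  push_cast
  ring

/-- The derivation `n·∂/∂p_n` of `Λ`. -/
def skewP (n : ℕ+) : Derivation ℚ Lam Lam := ((n : ℕ) : ℚ) • pderiv n

/-- `n·∂/∂p_n` is adjoint to multiplication by `p_n`. -/
lemma hall_mul_X (P Q : Lam) (n : ℕ+) : hall P (Q * X n) = hall (skewP n P) Q := by
  rw [hall_comm, hall_comm _ Q]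
  induction Q using MvPolynomial.induction_on' with
  | monomial α c =>
    rw [X, monomial_mul, hall_monomial, hall_monomial, zee_add_single, skewP,
      Derivation.smul_apply, coeff_smul, coeff_pderiv, smul_eq_mul]
    ring
  | add p q hp hq =>
    simp only [← hallL_apply] at *
    rw [add_mul, map_add, map_add, hp, hq]

/-! ### The action of `n·∂/∂p_n` on the complete symmetric functions -/

lemma hZ_neg {m : ℤ} (h : m < 0) : hZ m = 0 := if_neg (by omega)

lemma hZ_zero : hZ 0 = 1 := by simp [hZ, hh, genFam]

lemma hZ_natCast (k : ℕ) : hZ k = hh k := by simp [hZ]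

lemma hh_succ (k : ℕ) : ((k : ℚ) + 1) • hh (k + 1) =
    ∑ i ∈ Finset.range (k + 1), pp i.succPNat * hh (k - i) := by
  rw [hh, genFam, smul_smul, mul_inv_cancel₀ (by positivity), one_smul]
  refine Finset.sum_congr rfl fun i _ => ?_
  rw [one_smul]; rfl

/-- Newton's recursion for `h`, with the summation range extended arbitrarily since the
extra terms have negative index. -/
lemma hZ_rec (m : ℤ) (K : ℕ) (h : m ≤ K) : (m : ℚ) • hZ m =
    ∑ i ∈ Finset.range K, pp i.succPNat * hZ (m - 1 - i) := by
  rcases le_or_gt m 0 with h0 | h0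
  · rw [Finset.sum_eq_zero fun i _ => by rw [hZ_neg (by omega), mul_zero]]
    rcases h0.eq_or_lt with rfl | h0
    · simp
    · simp [hZ_neg h0]
  · obtain ⟨k, rfl⟩ : ∃ k : ℕ, m = ((k + 1 : ℕ) : ℤ) := ⟨(m - 1).toNat, by omega⟩
    rw [hZ_natCast]
    push_cast at h ⊢
    rw [hh_succ]
    symm
    rw [← Finset.sum_subset (s₁ := Finset.range (k + 1))]
    · refine Finset.sum_congr rfl fun i hi => ?_
      rw [Finset.mem_range] at hi
      rw [← hZ_natCast]; congr 2; omega
    · exact Finset.range_mono (by omega)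
    · intro i _ hi
      rw [Finset.mem_range] at hi
      rw [hZ_neg (by omega), mul_zero]

lemma skewP_pp (n m : ℕ+) : skewP n (pp m) = if m = n then C ((n : ℕ) : ℚ) else 0 := by
  classical
  rw [skewP, pp, Derivation.smul_apply, pderiv_X, Pi.single_apply]
  split_ifs
  · rw [smul_eq_C_mul, mul_one]
  · exact smul_zero _

lemma skewP_hZ (n : ℕ+) (m : ℤ) : skewP n (hZ m) = hZ (m - n) := by
  suffices H : ∀ k : ℕ, ∀ m : ℤ, m < k → skewP n (hZ m) = hZ (m - n) from
    H (m.toNat + 1) m (by omega)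
  intro k
  have hn := n.pos
  induction k with
  | zero => intro m hm; rw [hZ_neg (by omega), hZ_neg (by omega), map_zero]
  | succ k ih =>
    intro m hm
    rcases lt_trichotomy m 0 with h0 | rfl | h0
    · rw [hZ_neg (by omega), hZ_neg (by omega), map_zero]
    · rw [hZ_zero, hZ_neg (by omega), Derivation.map_one_eq_zero]
    · have hm0 : (m : ℚ) ≠ 0 := by exact_mod_cast h0.ne'
      refine smul_right_injective Lam hm0 ?_
      show (m : ℚ) • skewP n (hZ m) = (m : ℚ) • hZ (m - n)
      have hK : m ≤ ((m.toNat + n : ℕ) : ℤ) := by omega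
      rw [← Derivation.map_smul, hZ_rec m _ hK, map_sum]
      have step : ∀ i ∈ Finset.range (m.toNat + n),
          skewP n (pp i.succPNat * hZ (m - 1 - i)) =
          pp i.succPNat * hZ ((m - n) - 1 - i) +
            if i = (n : ℕ) - 1 then ((n : ℕ) : ℚ) • hZ (m - n) else 0 := by
        intro i _
        rw [Derivation.leibniz, ih _ (by omega), smul_eq_mul, smul_eq_mul, skewP_pp]
        congr 1
        · congr 2; ring
        · by_cases hi : i = (n : ℕ) - 1
          · have : i.succPNat = n := PNat.eq (by simp; omega)
            rw [if_pos this, if_pos hi, smul_eq_C_mul, mul_comm]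
            congr 2; omega
          · have : i.succPNat ≠ n := by
              intro h; apply hi; rw [← h]; simp
            rw [if_neg this, if_neg hi, mul_zero]
      rw [Finset.sum_congr rfl step, Finset.sum_add_distrib, ← hZ_rec _ _ (by omega),
        Finset.sum_ite_eq' , if_pos (by rw [Finset.mem_range]; omega), ← add_smul]
      push_cast
      congr 1; ring

/-! ### Pairing with a product of complete symmetric functions -/

/-- Specialization of a symmetric function to `N` variables: `p_n ↦ x_0^n + ⋯ + x_{N-1}^n`. -/
def ev (N : ℕ) : Lam →ₐ[ℚ] MvPolynomial (Fin N) ℚ := aeval fun n => ∑ i, X i ^ (n : ℕ)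

/-- The coefficient of `x^b` for an integer exponent vector `b`; it is `0` as soon as some
entry of `b` is negative. -/
def coeffZ {N : ℕ} (b : Fin N → ℤ) (q : MvPolynomial (Fin N) ℚ) : ℚ :=
  if ∀ i, 0 ≤ b i then coeff (Finsupp.equivFunOnFinite.symm fun i => (b i).toNat) q else 0

lemma coeffZ_add {N : ℕ} (b : Fin N → ℤ) (q r : MvPolynomial (Fin N) ℚ) :
    coeffZ b (q + r) = coeffZ b q + coeffZ b r := by
  unfold coeffZ; split_ifs <;> simp

lemma coeffZ_sum {N : ℕ} {ι : Type*} (b : Fin N → ℤ) (s : Finset ι)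
    (q : ι → MvPolynomial (Fin N) ℚ) :
    coeffZ b (∑ i ∈ s, q i) = ∑ i ∈ s, coeffZ b (q i) := by
  unfold coeffZ; split_ifs <;> simp [coeff_sum]

lemma coeffZ_monomial_mul {N : ℕ} (b : Fin N → ℤ) (c : Fin N →₀ ℕ) (r : ℚ)
    (q : MvPolynomial (Fin N) ℚ) :
    coeffZ b (monomial c r * q) = r * coeffZ (fun i => b i - c i) q := by
  unfold coeffZ
  by_cases h : ∀ i, 0 ≤ b i - c i
  · have h' : ∀ i, (c i : ℤ) ≤ b i := fun i => sub_nonneg.1 (h i)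
    have hb : ∀ i, 0 ≤ b i := fun i => (Int.natCast_nonneg _).trans (h' i)
    rw [if_pos h, if_pos hb, coeff_monomial_mul', if_pos]
    · congr 2
      ext i
      simp only [Finsupp.coe_tsub, Pi.sub_apply, Finsupp.equivFunOnFinite_symm_apply_apply]
      have := h' i
      omega
    · intro i
      simp only [Finsupp.equivFunOnFinite_symm_apply_apply]
      have := h' i
      omega
  · rw [if_neg h, mul_zero]
    split_ifs with hb
    · rw [coeff_monomial_mul', if_neg]
      intro hc
      apply h
      intro i
      have h1 := hc i
      have h2 := hb i
      simp only [Finsupp.equivFunOnFinite_symm_apply_apply] at h1 h2 ⊢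
      omega
    · rfl

lemma constantCoeff_hZ (m : ℤ) : constantCoeff (hZ m) = if m = 0 then (1 : ℚ) else 0 := by
  split_ifs with h
  · rw [h, hZ_zero, map_one]
  · rcases lt_or_gt_of_ne h with h0 | h0
    · rw [hZ_neg h0, map_zero]
    · have hm0 : (m : ℚ) ≠ 0 := by exact_mod_cast h
      have := congrArg constantCoeff (hZ_rec m m.toNat (by omega))
      rw [constantCoeff_smul, map_sum, Finset.sum_eq_zero] at this
      · simpa [hm0] using this
      · intro i _
        simp [pp]

/-- `⟨h_b, f⟩` is the coefficient of `x^b` in `f(x_0, …, x_{N-1})`: both sides satisfy the same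
recursion when `f` is multiplied by `p_n`, because `n·∂/∂p_n` sends `h_m` to `h_{m-n}`. -/
lemma hall_prod_hZ {N : ℕ} (f : Lam) (b : Fin N → ℤ) :
    hall (∏ i, hZ (b i)) f = coeffZ b (ev N f) := by
  classical
  induction f using MvPolynomial.induction_on generalizing b with
  | C c =>
    rw [hall_comm, ← monomial_zero', hall_monomial, ← constantCoeff_eq, map_prod]
    simp only [constantCoeff_hZ, Finset.prod_ite_zero, Finset.prod_const_one]
    have h1 : ev N (monomial 0 c) = monomial 0 c * 1 := by
      rw [mul_one, ← C_apply, ← C_apply, ev, aeval_C]; rfl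
    rw [h1, coeffZ_monomial_mul, show zee 0 = 1 from Finsupp.prod_zero_index, mul_one]
    congr 1
    simp only [Finsupp.coe_zero, Pi.zero_apply, Nat.cast_zero, sub_zero, coeffZ, coeff_one]
    by_cases hb : ∀ i, b i = 0
    · rw [if_pos (by simpa using hb), if_pos (fun i => (hb i).ge), if_pos]
      ext i; simp [hb i]
    · rw [if_neg (by simpa using hb)]
      split_ifs with h2 h3
      · exfalso
        apply hb
        intro i
        have h4 := DFunLike.congr_fun h3 i
        have h5 := h2 i
        simp only [Finsupp.coe_zero, Pi.zero_apply,
          Finsupp.equivFunOnFinite_symm_apply_apply] at h4 h5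
        omega
      · rfl
      · rfl
  | add p q hp hq => rw [hall_add_right, hp, hq, map_add, coeffZ_add]
  | mul_X p n hp =>
    rw [hall_mul_X, derivation_prod, ← hallL_apply, map_sum, map_mul, mul_comm (ev N p)]
    have hX : ev N (X n) = ∑ i, monomial (Finsupp.single i (n : ℕ)) (1 : ℚ) := by
      simp [ev, X_pow_eq_monomial]
    rw [hX, Finset.sum_mul, coeffZ_sum]
    refine Finset.sum_congr rfl fun i _ => ?_
    rw [coeffZ_monomial_mul, one_mul, ← hp, hallL_apply,
      ← Finset.mul_prod_erase Finset.univ _ (Finset.mem_univ i), skewP_hZ]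
    congr 2
    · simp
    · refine Finset.prod_congr rfl fun j hj => ?_
      simp [(Finset.ne_of_mem_erase hj).symm]

/-! ### The bialternant formula -/

/-- `∑ h_k(x) t^k = ∏_i 1 / (1 - x_i t)`, as power series over the polynomial ring. -/
lemma ev_hh {N : ℕ} (k : ℕ) : ev N (hh k) =
    PowerSeries.coeff k (∏ i : Fin N, PowerSeries.mk fun n => (X i : MvPolynomial (Fin N) ℚ) ^ n)
    := by
  classical
  set g : Fin N → PowerSeries (MvPolynomial (Fin N) ℚ) := fun i => PowerSeries.mk fun n => X i ^ n
    with hg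
  -- each factor `g = 1 / (1 - x t)` satisfies `g' = x g * g`
  have hd : ∀ i, PowerSeries.derivative (MvPolynomial (Fin N) ℚ) (g i) =
      (PowerSeries.mk fun n => X i ^ (n + 1)) * g i := by
    intro i
    ext1 n
    rw [PowerSeries.coeff_derivative, PowerSeries.coeff_mul, Finset.sum_congr rfl
      (g := fun _ => X i ^ (n + 1))]
    · simp [hg, mul_comm]
    · rintro ⟨a, b⟩ hab
      rw [Finset.HasAntidiagonal.mem_antidiagonal] at hab
      simp only [hg, PowerSeries.coeff_mk, ← pow_add] at hab ⊢
      congr 1; omega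
  have hD : PowerSeries.derivative (MvPolynomial (Fin N) ℚ) (∏ i, g i) =
      (PowerSeries.mk fun n => ∑ i, X i ^ (n + 1)) * ∏ i, g i := by
    rw [derivation_prod]
    have : (PowerSeries.mk fun n => ∑ i : Fin N, (X i : MvPolynomial (Fin N) ℚ) ^ (n + 1)) =
        ∑ i : Fin N, PowerSeries.mk fun n => X i ^ (n + 1) := by
      ext1 n; simp
    rw [this, Finset.sum_mul]
    refine Finset.sum_congr rfl fun i _ => ?_
    rw [hd, mul_assoc, Finset.mul_prod_erase _ _ (Finset.mem_univ i)]
  induction k using Nat.strong_induction_on with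
  | _ k ih =>
    cases k with
    | zero => simp [hh, genFam, hg]
    | succ k =>
      have h1 := congrArg (PowerSeries.coeff k) hD
      rw [PowerSeries.coeff_derivative, PowerSeries.coeff_mul,
        Finset.Nat.sum_antidiagonal_eq_sum_range_succ_mk] at h1
      have h2 := congrArg (ev N) (hh_succ k)
      rw [map_smul, map_sum] at h2
      have hk : (k : ℚ) + 1 ≠ 0 := by positivity
      refine smul_right_injective _ hk ?_
      show ((k : ℚ) + 1) • _ = ((k : ℚ) + 1) • _
      rw [h2, smul_eq_C_mul, mul_comm, show (C ((k : ℚ) + 1) : MvPolynomial (Fin N) ℚ) = k + 1 by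
        simp, h1]
      refine Finset.sum_congr rfl fun i hi => ?_
      rw [map_mul, ih (k - i) (by omega)]
      simp [ev, pp]

/-- The polynomial `∏_{i ≠ k} (1 - x_i t)` in `t`. -/
def dualPoly {N : ℕ} (k : Fin N) : Polynomial (MvPolynomial (Fin N) ℚ) :=
  ∏ i ∈ Finset.univ.erase k, (1 - Polynomial.C (X i) * Polynomial.X)

lemma natDegree_dualPoly {N : ℕ} (k : Fin N) : (dualPoly k).natDegree ≤ N - 1 := by
  refine (Polynomial.natDegree_prod_le _ _).trans ?_
  refine (Finset.sum_le_card_nsmul _ _ 1 fun i _ => ?_).trans (by simp)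
  compute_degree

/-- Multiplying `∏_i 1/(1 - x_i t)` by `∏_{i ≠ k} (1 - x_i t)` leaves `1/(1 - x_k t)`. -/
lemma gen_mul_dualPoly {N : ℕ} (k : Fin N) :
    (∏ i : Fin N, PowerSeries.mk fun n => (X i : MvPolynomial (Fin N) ℚ) ^ n) *
      (dualPoly k : PowerSeries (MvPolynomial (Fin N) ℚ)) =
    PowerSeries.mk fun n => (X k : MvPolynomial (Fin N) ℚ) ^ n := by
  classical
  rw [← Finset.mul_prod_erase _ _ (Finset.mem_univ k), mul_assoc, dualPoly,
    ← Polynomial.coeToPowerSeries.ringHom_apply, map_prod, ← Finset.prod_mul_distrib,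
    Finset.prod_eq_one, mul_one]
  intro i _
  simp only [map_sub, map_one, map_mul, Polynomial.coeToPowerSeries.ringHom_apply,
    Polynomial.coe_C, Polynomial.coe_X]
  ext1 n
  rw [mul_sub, mul_one, ← mul_assoc, map_sub]
  cases n with
  | zero => simp
  | succ n =>
    rw [PowerSeries.coeff_succ_mul_X, PowerSeries.coeff_mul_C]
    simp [PowerSeries.coeff_one, pow_succ]

/-- The coefficient of `t^{m + N - 1}` in the preceding identity; only the `N` coefficients of
`∏_{i ≠ k} (1 - x_i t)` contribute. -/
lemma sum_hZ_dualPoly {N : ℕ} (k : Fin N) (m : ℤ) (e : ℕ) (he : (e : ℤ) = m + N - 1) :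
    ∑ j : Fin N, ev N (hZ (m + (j : ℕ))) * (dualPoly k).coeff (N - 1 - j) = X k ^ e := by
  have h := congrArg (PowerSeries.coeff e) (gen_mul_dualPoly k)
  rw [PowerSeries.coeff_mk, mul_comm, PowerSeries.coeff_mul,
    Finset.Nat.sum_antidiagonal_eq_sum_range_succ_mk] at h
  rw [← h]
  have hN := k.pos
  simp only [← ev_hh, Polynomial.coeff_coe]
  have key : ∀ K, e < K → N ≤ K → ∑ a ∈ Finset.range K,
      (dualPoly k).coeff a * ev N (hZ ((e : ℤ) - a)) =
      ∑ a ∈ Finset.range (e + 1), (dualPoly k).coeff a * ev N (hh (e - a)) := by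
    intro K h1 h2
    symm
    refine Finset.sum_subset_zero_on_sdiff (Finset.range_mono (by omega)) ?_ ?_
    · intro a ha
      simp only [Finset.mem_sdiff, Finset.mem_range] at ha
      rw [hZ_neg (by omega), map_zero, mul_zero]
    · intro a ha
      rw [Finset.mem_range] at ha
      rw [← hZ_natCast]; congr 3; omega
  rw [← key (e + 1 + N) (by omega) (by omega),
    Fin.sum_univ_eq_sum_range (fun j => ev N (hZ (m + (j : ℕ))) * (dualPoly k).coeff (N - 1 - j)),
    ← Finset.sum_range_reflect]
  refine Finset.sum_subset_zero_on_sdiff (Finset.range_mono (by omega)) ?_ ?_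
  · intro a ha
    simp only [Finset.mem_sdiff, Finset.mem_range] at ha
    rw [Polynomial.coeff_eq_zero_of_natDegree_lt, zero_mul]
    have := natDegree_dualPoly k
    omega
  · intro a ha
    rw [Finset.mem_range] at ha
    rw [mul_comm]
    rw [show N - 1 - (N - 1 - a) = a by omega,
      show m + ((N - 1 - a : ℕ) : ℤ) = e - a by omega]

/-- The alternant `det (x_k^{μ_i + N - 1 - i})`, with row index `i` and column index `k`. -/
def alternant {N : ℕ} (mu : Fin N → ℕ) : MvPolynomial (Fin N) ℚ :=
  (Matrix.of fun i k : Fin N => X k ^ (mu i + (N - 1 - i))).det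

lemma schur_zero (N : ℕ) : schur (fun _ : Fin N => (0 : ℤ)) = 1 := by
  rw [schur, Matrix.det_of_isUpperTriangular]
  · simp [hZ_zero]
  · intro i j hij
    have : (j : ℕ) < i := hij
    exact hZ_neg (by omega)

lemma ev_schur_mul_det {N : ℕ} (mu : Fin N → ℕ) :
    ev N (schur fun i => (mu i : ℤ)) *
      (Matrix.of fun j k : Fin N => (dualPoly k).coeff (N - 1 - j)).det = alternant mu := by
  rw [schur, AlgHom.map_det, ← Matrix.det_mul, alternant]
  congr 1
  ext1 i k
  have := i.2
  simpa [Matrix.mul_apply] using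
    sum_hZ_dualPoly k (mu i - (i : ℕ)) (mu i + (N - 1 - i)) (by omega)

lemma ev_schur_mul_alternant {N : ℕ} (mu : Fin N → ℕ) :
    ev N (schur fun i => (mu i : ℤ)) * alternant (fun _ : Fin N => 0) = alternant mu := by
  rw [← ev_schur_mul_det mu, ← ev_schur_mul_det fun _ : Fin N => 0]
  simp only [Nat.cast_zero]
  rw [schur_zero, map_one, one_mul]

/-- The Leibniz expansion of an alternant into signed monomials. -/
lemma alternant_eq {N : ℕ} (mu : Fin N → ℕ) : alternant mu =
    ∑ σ : Equiv.Perm (Fin N), monomial (Finsupp.equivFunOnFinite.symm fun k =>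
      mu (σ k) + (N - 1 - (σ k : ℕ))) (((Equiv.Perm.sign σ : ℤ) : ℚ)) := by
  rw [alternant, Matrix.det_apply']
  refine Finset.sum_congr rfl fun σ _ => ?_
  rw [monomial_eq, Finsupp.prod_fintype _ _ (by simp), map_intCast]
  simp

/-! ### Orthonormality for partitions with a common number of parts -/

lemma hall_schur {N : ℕ} (lam : Fin N → ℕ) (f : Lam) :
    hall (schur fun i => (lam i : ℤ)) f =
      coeffZ (fun i => ((lam i + (N - 1 - i) : ℕ) : ℤ)) (alternant (fun _ => 0) * ev N f) := by
  rw [schur, ← Matrix.det_transpose, Matrix.det_apply', alternant_eq, Finset.sum_mul, coeffZ_sum,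
    ← hallL_apply, map_sum]
  refine Finset.sum_congr rfl fun σ _ => ?_
  rw [coeffZ_monomial_mul, ← zsmul_eq_mul, map_zsmul, zsmul_eq_mul, hallL_apply]
  simp only [Matrix.transpose_apply, Matrix.of_apply]
  rw [hall_prod_hZ]
  congr 2
  ext i
  have h1 := i.2
  have h2 := (σ i).2
  simp only [Finsupp.equivFunOnFinite_symm_apply_apply]
  omega

lemma strictAnti_shift {N : ℕ} {mu : Fin N → ℕ} (h : Antitone mu) :
    StrictAnti fun i : Fin N => mu i + (N - 1 - i) := by
  intro i j hij
  have h1 := h hij.le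
  have h2 : (i : ℕ) < j := hij
  have h3 := j.2
  show mu j + (N - 1 - j) < mu i + (N - 1 - i)
  omega

/-- A permutation carrying one strictly decreasing sequence to another is trivial. -/
lemma perm_eq_one_of_strictAnti {N : ℕ} {α β : Fin N → ℕ} (hα : StrictAnti α) (hβ : StrictAnti β)
    (σ : Equiv.Perm (Fin N)) (h : ∀ k, β (σ k) = α k) : σ = 1 := by
  have hσ : StrictMono σ := fun i j hij => by
    rw [← hβ.lt_iff_gt, h, h]; exact hα hij
  have := hσ.range_inj (strictMono_id (α := Fin N))
  ext i
  rw [this.1 (by simp [σ.surjective.range_eq])]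
  rfl

lemma schur_orthonormal_same {N : ℕ} (lam mu : Fin N → ℕ) (hlam : Antitone lam)
    (hmu : Antitone mu) :
    hall (schur fun i => (lam i : ℤ)) (schur fun i => (mu i : ℤ)) =
      if lam = mu then 1 else 0 := by
  rw [hall_schur, mul_comm, ev_schur_mul_alternant, alternant_eq, coeffZ, if_pos (by
    intro i; exact Int.natCast_nonneg _), coeff_sum]
  simp only [coeff_monomial, EmbeddingLike.apply_eq_iff_eq, Int.toNat_natCast]
  rw [Finset.sum_eq_single 1]
  · simp only [Equiv.Perm.coe_one, id_eq, Equiv.Perm.sign_one, Units.val_one, Int.cast_one]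
    congr 1
    rw [eq_comm, eq_iff_iff, funext_iff, funext_iff]
    exact forall_congr' fun i => by omega
  · intro σ _ hσ
    rw [if_neg]
    intro h
    exact hσ (perm_eq_one_of_strictAnti (strictAnti_shift hlam) (strictAnti_shift hmu) σ
      (congrFun h))
  · simp

/-! ### Padding a partition by zeros -/

lemma schur_pad_one (f : ℕ → ℕ) (n : ℕ) (h : f n = 0) :
    schur (fun i : Fin (n + 1) => (f i : ℤ)) = schur fun i : Fin n => (f i : ℤ) := by
  rw [schur, Matrix.det_succ_row _ (Fin.last n), Fin.sum_univ_castSucc, Finset.sum_eq_zero]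
  · simp only [Matrix.of_apply, Fin.val_last, h]
    rw [show ((0 : ℕ) : ℤ) - n + n = 0 by simp, hZ_zero, Even.neg_one_pow ⟨n, rfl⟩, schur]
    simp only [zero_add, one_mul, Fin.succAbove_last]
    rfl
  · intro j _
    have := j.2
    simp only [Matrix.of_apply, Fin.val_last, h, Fin.val_castSucc]
    rw [hZ_neg (by omega)]
    simp

lemma schur_pad (f : ℕ → ℕ) (l : ℕ) (h : ∀ n, l ≤ n → f n = 0) (m : ℕ) :
    schur (fun i : Fin (l + m) => (f i : ℤ)) = schur fun i : Fin l => (f i : ℤ) := by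
  induction m with
  | zero => rfl
  | succ m ih => rw [← ih]; exact schur_pad_one f (l + m) (h _ (by omega))

/-- Extension of a tuple by zeros to all natural indices. -/
def padZero {l : ℕ} (lam : Fin l → ℕ) (n : ℕ) : ℕ := if h : n < l then lam ⟨n, h⟩ else 0

lemma padZero_antitone {l : ℕ} {lam : Fin l → ℕ} (h : Antitone lam) : Antitone (padZero lam) := by
  intro a b hab
  unfold padZero
  split_ifs with h1 h2
  · exact h hab
  · omega
  · exact Nat.zero_le _
  · rfl

lemma schur_padZero {l : ℕ} (lam : Fin l → ℕ) (N : ℕ) (h : l ≤ N) :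
    schur (fun i : Fin N => (padZero lam i : ℤ)) = schur fun i => (lam i : ℤ) := by
  obtain ⟨m, rfl⟩ := Nat.exists_eq_add_of_le h
  rw [schur_pad (padZero lam) l fun n hn => dif_neg (by omega)]
  congr 1
  ext i
  simp [padZero]

/-- Positivity of the parts lets the length be read off from the padded sequence. -/
lemma length_le_of_padZero {l₁ l₂ N : ℕ} {lam : Fin l₁ → ℕ} {mu : Fin l₂ → ℕ} (hN : l₁ ≤ N)
    (hlam1 : ∀ i, 1 ≤ lam i)
    (h : (fun i : Fin N => padZero lam i) = fun i : Fin N => padZero mu i) : l₁ ≤ l₂ := by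
  by_contra! hlt
  have h1 := congrFun h ⟨l₂, by omega⟩
  have h2 := hlam1 ⟨l₂, hlt⟩
  simp [padZero, hlt] at h1
  omega

lemma ofFn_eq_iff_padZero {l₁ l₂ N : ℕ} {lam : Fin l₁ → ℕ} {mu : Fin l₂ → ℕ} (h₁ : l₁ ≤ N)
    (h₂ : l₂ ≤ N) (hlam1 : ∀ i, 1 ≤ lam i) (hmu1 : ∀ i, 1 ≤ mu i) :
    ((fun i : Fin N => padZero lam i) = fun i : Fin N => padZero mu i) ↔
      List.ofFn lam = List.ofFn mu := by
  constructor
  · intro h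
    obtain rfl : l₁ = l₂ := le_antisymm (length_le_of_padZero h₁ hlam1 h)
      (length_le_of_padZero h₂ hmu1 h.symm)
    congr 1
    ext i
    simpa [padZero] using congrFun h ⟨i, by omega⟩
  · intro h
    obtain rfl : l₁ = l₂ := by simpa using congrArg List.length h
    rw [List.ofFn_injective h]

/-- the Schur functions form an orthonormal family for the Hall inner
product: for all partitions `λ, μ` (with all parts ≥ 1, so that the indexing is
unambiguous), `⟨s_λ, s_μ⟩ = δ_{λ,μ}`, where `s_λ = det (h_{λ_i − i + j})`. -/
theorem schur_orthonormal (l₁ l₂ : ℕ) (lam : Fin l₁ → ℕ) (mu : Fin l₂ → ℕ)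
    (hlam : Antitone lam) (hmu : Antitone mu)
    (hlam1 : ∀ i, 1 ≤ lam i) (hmu1 : ∀ i, 1 ≤ mu i) :
    hall (schur fun i => (lam i : ℤ)) (schur fun i => (mu i : ℤ))
      = if List.ofFn lam = List.ofFn mu then 1 else 0 := by
  have h₁ : l₁ ≤ l₁ + l₂ := Nat.le_add_right _ _
  have h₂ : l₂ ≤ l₁ + l₂ := Nat.le_add_left _ _
  rw [← schur_padZero lam _ h₁, ← schur_padZero mu _ h₂,
    schur_orthonormal_same (fun i : Fin (l₁ + l₂) => padZero lam i) (fun i => padZero mu i)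
      (fun _ _ hab => padZero_antitone hlam hab) (fun _ _ hab => padZero_antitone hmu hab)]
  exact if_congr (ofFn_eq_iff_padZero h₁ h₂ hlam1 hmu1) rfl rfl
end
end

section
/- Jacobi–Trudi identity (equivalence of the Weyl character formula and the determinant of complete homogeneous polynomials): let n ≥ 1 and let λ be a partition with at most n parts, padded with zeros to length n, and δ = (n−1, n−2, …, 1, 0). Then in ℤ[x₁,…,x_n]: ∑_{σ∈S_n} sgn(σ) ∏_{i=1}^n x_i^{(λ+δ)_{σ(i)}} = det( h_{λ_i−i+j}(x₁,…,x_n) )_{1≤i,j≤n} · ∏_{1≤i<j≤n}(x_i − x_j). -/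
/-!
Write `H(t) = ∑ h_r t^r = ∏_l 1 / (1 - x_l t)`. Deleting the factor of `x_k` from the denominator
gives a polynomial `E_k(t) = ∏_{l ≠ k} (1 - x_l t)` of degree less than `n`, and
`E_k(t) H(t) = 1 / (1 - x_k t)`. Comparing coefficients of `t^a` yields
`x_k^a = ∑_{m < n} [t^m] E_k · h_{a - m}` for every `a ≥ 0` (`sum_hfinZ_mul_coeff`).

For `a = (λ + δ)_i` this says that the alternant matrix `(x_k^{(λ + δ)_i})_{i,k}` factors as
`(h_{λ_i - i + j})_{i,j} * C`, where `C` has entries `[t^{n-1-j}] E_k` and does not depend on `λ`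
(`jtMatrix_mul_coeffMatrix`). For `λ = 0` the first factor is upper unitriangular, so `det C` is the
Vandermonde determinant `∏_{i<j} (x_i - x_j)` (`det_coeffMatrix`). Taking determinants for general
`λ` gives the identity.
-/

open MvPolynomial

noncomputable section

/-- The complete homogeneous symmetric polynomial `h_k (x₁, …, x_n)`: the sum of all
monomials of degree `k` in the variables `x₁, …, x_n`. -/
def hfin (n k : ℕ) : MvPolynomial (Fin n) ℤ :=
  ∑ s : Sym (Fin n) k, (s.1.map X).prod

/-- `h` indexed by `ℤ` (zero for negative degrees). -/
def hfinZ (n : ℕ) (k : ℤ) : MvPolynomial (Fin n) ℤ :=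
  if 0 ≤ k then hfin n k.toNat else 0

/-- The geometric series `1 / (1 - x_l t)` over `ℤ[x₁,…,x_n]`. -/
def geomSeries (n : ℕ) (l : Fin n) : PowerSeries (MvPolynomial (Fin n) ℤ) :=
  PowerSeries.mk fun r => X l ^ r

/-- The polynomial `∏_{l ≠ k} (1 - x_l t)` in `t` over `ℤ[x₁,…,x_n]`. -/
def deletedPoly (n : ℕ) (k : Fin n) : Polynomial (MvPolynomial (Fin n) ℤ) :=
  ∏ l ∈ Finset.univ.erase k, (1 - Polynomial.C (X l) * Polynomial.X)

/-- The matrix `(h_{λ_i - i + j})_{i,j}`. -/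
def jtMatrix (n : ℕ) (lam : Fin n → ℕ) : Matrix (Fin n) (Fin n) (MvPolynomial (Fin n) ℤ) :=
  Matrix.of fun i j => hfinZ n ((lam i : ℤ) - (i.1 : ℤ) + (j.1 : ℤ))

/-- The matrix with `(j, k)` entry the coefficient of `t^(n-1-j)` in `∏_{l ≠ k} (1 - x_l t)`. -/
def coeffMatrix (n : ℕ) : Matrix (Fin n) (Fin n) (MvPolynomial (Fin n) ℤ) :=
  Matrix.of fun j k => (deletedPoly n k).coeff j.rev

lemma one_sub_mul_geomSeries (n : ℕ) (l : Fin n) :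
    (1 - PowerSeries.C (X l) * PowerSeries.X) * geomSeries n l = 1 := by
  ext r : 1
  rw [sub_mul, one_mul, mul_assoc]
  cases r with
  | zero => simp [geomSeries]
  | succ r =>
    simp [geomSeries, PowerSeries.coeff_succ_X_mul, PowerSeries.coeff_one, pow_succ']

/-- `∑ h_r t^r = ∏_l 1 / (1 - x_l t)`: multisets of size `r` correspond to exponent vectors of
total degree `r`. -/
lemma mk_hfin_eq_prod (n : ℕ) : PowerSeries.mk (hfin n) = ∏ l, geomSeries n l := by
  ext1 r
  rw [PowerSeries.coeff_prod, PowerSeries.coeff_mk, hfin]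
  refine Finset.sum_bij (fun s _ => Multiset.toFinsupp s.1) ?_ ?_ ?_ ?_
  · intro s _
    rw [Finset.mem_finsuppAntidiag]
    refine ⟨?_, Finset.subset_univ _⟩
    have hs : ∑ i, s.1.count i = s.1.card := Multiset.sum_count_eq_card fun i _ => Finset.mem_univ i
    exact hs.trans s.2
  · intro s _ t _ h
    exact Subtype.ext (Multiset.toFinsupp.injective h)
  · intro f hf
    have hf' : ∑ i, f i = r := by simpa using hf
    refine ⟨⟨Finsupp.toMultiset f, ?_⟩, Finset.mem_univ _, by simp⟩
    rw [Finsupp.card_toMultiset, Finsupp.sum_fintype _ _ (by simp)]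
    simpa using hf'
  · intro s _
    rw [Finset.prod_multiset_map_count]
    simp only [geomSeries, PowerSeries.coeff_mk, Multiset.toFinsupp_apply]
    refine Finset.prod_subset (Finset.subset_univ _) fun i _ hi => ?_
    rw [Multiset.count_eq_zero_of_notMem (by simpa using hi), pow_zero]

lemma deletedPoly_mul_mk_hfin (n : ℕ) (k : Fin n) :
    (deletedPoly n k : PowerSeries (MvPolynomial (Fin n) ℤ)) * PowerSeries.mk (hfin n)
      = geomSeries n k := by
  have h : (deletedPoly n k : PowerSeries (MvPolynomial (Fin n) ℤ))
      = ∏ l ∈ Finset.univ.erase k, (1 - PowerSeries.C (X l) * PowerSeries.X) := by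
    rw [deletedPoly, ← Polynomial.coeToPowerSeries.ringHom_apply, map_prod]
    simp
  rw [h, mk_hfin_eq_prod, ← Finset.prod_erase_mul _ _ (Finset.mem_univ k), ← mul_assoc,
    ← Finset.prod_mul_distrib, Finset.prod_eq_one fun l _ => one_sub_mul_geomSeries n l, one_mul]

lemma natDegree_deletedPoly_lt (n : ℕ) (k : Fin n) : (deletedPoly n k).natDegree < n := by
  have h : (deletedPoly n k).natDegree ≤ ∑ l ∈ Finset.univ.erase k, 1 := by
    refine (Polynomial.natDegree_prod_le _ _).trans (Finset.sum_le_sum fun l _ => ?_)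
    compute_degree
  have := k.pos
  simp at h
  omega

/-- Coefficient of `t^a` in `∏_{l ≠ k} (1 - x_l t) · ∑ h_r t^r = 1 / (1 - x_k t)`. -/
lemma sum_hfinZ_mul_coeff (n a : ℕ) (k : Fin n) :
    ∑ m ∈ Finset.range n, hfinZ n ((a : ℤ) - m) * (deletedPoly n k).coeff m = X k ^ a := by
  have h := congrArg (PowerSeries.coeff a) (deletedPoly_mul_mk_hfin n k)
  rw [PowerSeries.coeff_mul, Finset.Nat.sum_antidiagonal_eq_sum_range_succ_mk] at h
  simp only [geomSeries, PowerSeries.coeff_mk, Polynomial.coeff_coe] at h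
  rw [← h]
  -- Both sums extend to `m < n + (a + 1)`: the coefficients vanish for `m ≥ n`, and `h_{a-m} = 0`
  -- for `m > a`.
  trans ∑ m ∈ Finset.range (n + (a + 1)), hfinZ n ((a : ℤ) - m) * (deletedPoly n k).coeff m
  · refine Finset.sum_subset (by simp) fun m _ hm => ?_
    have hd := natDegree_deletedPoly_lt n k
    rw [Finset.mem_range] at hm
    rw [Polynomial.coeff_eq_zero_of_natDegree_lt (by omega), mul_zero]
  · symm
    refine Finset.sum_subset_zero_on_sdiff (by simp) (fun m hm => ?_) fun m hm => ?_
    · have hm' : ¬ (0 ≤ (a : ℤ) - m) := by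
        simp at hm
        omega
      rw [hfinZ, if_neg hm', zero_mul]
    · have hm' : m ≤ a := by
        simp at hm
        omega
      rw [hfinZ, if_pos (by omega), mul_comm, show ((a : ℤ) - m).toNat = a - m by omega]

lemma jtMatrix_mul_coeffMatrix (n : ℕ) (lam : Fin n → ℕ) :
    jtMatrix n lam * coeffMatrix n = Matrix.of fun i k => X k ^ (lam i + (n - 1 - i.1)) := by
  ext1 i k
  rw [Matrix.mul_apply, Matrix.of_apply, ← sum_hfinZ_mul_coeff, Finset.sum_range,
    ← Equiv.sum_comp Fin.revPerm]
  refine Finset.sum_congr rfl fun j _ => ?_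
  simp only [jtMatrix, coeffMatrix, Matrix.of_apply, Fin.revPerm_apply, Fin.rev_rev]
  congr 2
  rw [Fin.val_rev]
  omega

lemma det_jtMatrix_zero (n : ℕ) : (jtMatrix n 0).det = 1 := by
  rw [Matrix.det_of_isUpperTriangular]
  · have h0 : hfin n 0 = 1 := hsymm_zero (Fin n) ℤ
    simp [jtMatrix, hfinZ, h0]
  · intro i j hij
    have hij' : j.1 < i.1 := hij
    simp only [jtMatrix, Matrix.of_apply, hfinZ, Pi.zero_apply]
    rw [if_neg (by push_cast; omega)]

lemma det_coeffMatrix (n : ℕ) : (coeffMatrix n).det =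
    ∏ p ∈ Finset.univ.filter (fun p : Fin n × Fin n => p.1 < p.2), (X p.1 - X p.2) := by
  have hV : jtMatrix n 0 * coeffMatrix n = (Matrix.projVandermonde 1 X).transpose := by
    rw [jtMatrix_mul_coeffMatrix]
    ext1 i k
    rw [Matrix.transpose_apply, Matrix.projVandermonde_apply, Matrix.of_apply, Fin.val_rev,
      show n - (i.1 + 1) = n - 1 - i.1 by omega]
    simp
  have hdet := congrArg Matrix.det hV
  rw [Matrix.det_mul, det_jtMatrix_zero, one_mul, Matrix.det_transpose,
    Matrix.det_projVandermonde] at hdet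
  rw [hdet, Finset.prod_filter, Fintype.prod_prod_type]
  refine Finset.prod_congr rfl fun i _ => ?_
  rw [← Finset.prod_filter]
  refine Finset.prod_congr (by ext j; simp) fun j _ => by simp

/-- the Jacobi–Trudi identity (equivalence of the Weyl character formula and
the determinant of complete homogeneous polynomials): for a partition `λ` with at most
`n` parts (padded with zeros) and `δ = (n−1, n−2, …, 1, 0)`, in `ℤ[x₁,…,x_n]`:
`∑_{σ ∈ S_n} sgn(σ) ∏_i x_i^{(λ+δ)_{σ(i)}}
   = det (h_{λ_i − i + j} (x₁,…,x_n)) · ∏_{i<j} (x_i − x_j)`. -/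
theorem jacobi_trudi (n : ℕ) (hn : 1 ≤ n) (lam : Fin n → ℕ) (hlam : Antitone lam) :
    ∑ σ : Equiv.Perm (Fin n), (Equiv.Perm.sign σ : ℤ) •
        ∏ i : Fin n, (X i : MvPolynomial (Fin n) ℤ) ^ (lam (σ i) + (n - 1 - (σ i).1))
      = (Matrix.of fun i j : Fin n => hfinZ n ((lam i : ℤ) - (i.1 : ℤ) + (j.1 : ℤ))).det *
        ∏ p ∈ Finset.univ.filter (fun p : Fin n × Fin n => p.1 < p.2), (X p.1 - X p.2) := by
  have h := congrArg Matrix.det (jtMatrix_mul_coeffMatrix n lam)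
  rw [Matrix.det_mul, det_coeffMatrix] at h
  rw [jtMatrix] at h
  rw [h, Matrix.det_apply]
  exact Finset.sum_congr rfl fun σ _ => rfl
end
end
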